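/- The skew Schur function s_{(5,4,3,2,1)/(3,2)} equals P_{(5,4,1)} + P_{(5,3,2)}. -/

import Mathlib

/-!
STATEMENT 12: s_{(5,4,3,2,1)/(3,2)} = P_{(5,4,1)} + P_{(5,3,2)}.
-/

noncomputable section

/-- The cells of the skew Young diagram lam/mu (rows 0-indexed). -/
def skewCells (lam mu : List ℕ) : Finset (ℕ × ℕ) :=
  (Finset.range lam.length ×ˢ Finset.range (lam.foldr max 0)).filter
    (fun c => mu.getD c.1 0 ≤ c.2 ∧ c.2 < lam.getD c.1 0)

/-- A semistandard Young tableau of skew shape lam/mu: entries are positive integers,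
rows weakly increase, columns strictly increase. -/
structure SkewSSYT (lam mu : List ℕ) where
  entry : ℕ × ℕ → ℕ
  outside : ∀ c ∉ skewCells lam mu, entry c = 0
  pos : ∀ c ∈ skewCells lam mu, 1 ≤ entry c
  rowWeak : ∀ i j, (i, j) ∈ skewCells lam mu → (i, j + 1) ∈ skewCells lam mu →
    entry (i, j) ≤ entry (i, j + 1)
  colStrict : ∀ i j, (i, j) ∈ skewCells lam mu → (i + 1, j) ∈ skewCells lam mu →
    entry (i, j) < entry (i + 1, j)

/-- The skew Schur function s_{lam/mu} = ∑_T x^T, as a formal power series in the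
variables x₁, x₂, … (indexed by ℕ; the variable `X k` records entries equal to `k`). -/
def skewSchur (lam mu : List ℕ) : MvPowerSeries ℕ ℚ :=
  fun m => (Nat.card {T : SkewSSYT lam mu //
    ∀ k, ((skewCells lam mu).filter (fun c => T.entry c = k)).card = m k} : ℚ)

/-- The cells of the shifted diagram of a strict partition `lam` (row `i` indented `i`). -/
def shiftedCells (lam : List ℕ) : Finset (ℕ × ℕ) :=
  (Finset.range lam.length ×ˢ Finset.range (lam.length + lam.foldr max 0)).filter
    (fun c => c.1 ≤ c.2 ∧ c.2 < c.1 + lam.getD c.1 0)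

/-- A shifted semistandard Young tableau of shifted shape `lam`, over the alphabet
1' < 1 < 2' < 2 < ⋯ encoded as natural numbers: the letter k' is `2k - 1` (odd) and the
letter k is `2k` (even), for k ≥ 1.  Rows and columns weakly increase; two equal adjacent
letters in a row must be unprimed (each k' occurs at most once per row) and two equal
adjacent letters in a column must be primed (each k occurs at most once per column);
entries on the main diagonal are unprimed. -/
structure ShiftedSSYT (lam : List ℕ) where
  entry : ℕ × ℕ → ℕ
  outside : ∀ c ∉ shiftedCells lam, entry c = 0
  pos : ∀ c ∈ shiftedCells lam, 1 ≤ entry c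
  rowWeak : ∀ i j, (i, j) ∈ shiftedCells lam → (i, j + 1) ∈ shiftedCells lam →
    entry (i, j) ≤ entry (i, j + 1)
  rowPrime : ∀ i j, (i, j) ∈ shiftedCells lam → (i, j + 1) ∈ shiftedCells lam →
    entry (i, j) = entry (i, j + 1) → Even (entry (i, j))
  colWeak : ∀ i j, (i, j) ∈ shiftedCells lam → (i + 1, j) ∈ shiftedCells lam →
    entry (i, j) ≤ entry (i + 1, j)
  colPrime : ∀ i j, (i, j) ∈ shiftedCells lam → (i + 1, j) ∈ shiftedCells lam →
    entry (i, j) = entry (i + 1, j) → Odd (entry (i, j))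
  diag : ∀ i, (i, i) ∈ shiftedCells lam → Even (entry (i, i))

/-- The Schur P-function P_lam = ∑_S x^S: the variable `X k` records the total number of
occurrences of the letters k and k' (encoded `2k` and `2k - 1`). -/
def schurP (lam : List ℕ) : MvPowerSeries ℕ ℚ :=
  fun m => (Nat.card {S : ShiftedSSYT lam //
    ∀ k, ((shiftedCells lam).filter (fun c => (S.entry c + 1) / 2 = k)).card = m k} : ℚ)

/-! ## Generic fillings of ten cells

A filling is a function `e : ℕ → ℕ` on the cells `0, …, 9`; `P` lists for every cell its left
(`true`) and upper (`false`) neighbours, `D` says which cells only take unprimed letters. -/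

def hv (h : Bool) (x y : ℕ) : Prop :=
  x < y ∨ (x = y ∧ ((h = true ∧ x % 2 = 0) ∨ (h = false ∧ (x % 2 = 1 ∨ x = 0))))

def rel4 (h : Bool) (x y : ℕ) : Bool :=
  Nat.blt x y || (Nat.beq x y && (Nat.beq x 0 || Nat.beq x 3 || Nat.beq x (cond h 2 1)))

def Valid (P : List (List (ℕ × Bool))) (D : List Bool) (e : ℕ → ℕ) : Prop :=
  ∀ c < 10, (D.getD c false = true → e c % 2 = 0) ∧
    ∀ q ∈ P.getD c [], hv q.2 (e q.1) (e c)

/-- Fillings of the cells in the mask `I` with letters larger than `k`. -/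
def Fills (P : List (List (ℕ × Bool))) (D : List Bool) (m : ℕ → ℕ) (k I : ℕ) : Set (ℕ → ℕ) :=
  {e | (∀ c, 10 ≤ c → e c = 0) ∧ Valid P D e ∧
    (∀ c < 10, (I.testBit c = true → 2 * k < e c) ∧ (I.testBit c = false → e c = 0)) ∧
    ∀ j, k ≤ j → (List.range 10).countP (fun c => (e c + 1) / 2 = j + 1) = m (j + 1)}

def okCell (P : List (List (ℕ × Bool))) (D : List Bool) (I i : ℕ) (l : List ℕ) (x : ℕ) : Bool :=
  (Nat.testBit I i == !(Nat.beq x 0)) && !(D.getD i false && Nat.beq x 1) &&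
    (P.getD i []).all (fun q => rel4 q.2 (l.getD q.1 0) x)

/-- All ways to peel off one letter: `0` is an absent cell, `1`, `2` are cells with the primed or
unprimed letter, `3` is a cell with a larger letter. -/
def layers (P : List (List (ℕ × Bool))) (D : List Bool) (I : ℕ) : ℕ → List (List ℕ)
  | 0 => [[]]
  | n + 1 => (layers P D I n).flatMap
      (fun l => ([0, 1, 2, 3].filter (fun x => okCell P D I n l x)).map (fun x => l ++ [x]))

def code : List ℕ → ℕ
  | [] => 0
  | x :: l => cond (Nat.beq x 3) 1 0 + 2 * code l

def cnt (l : List ℕ) : ℕ := l.countP (fun x => Nat.beq x 1 || Nat.beq x 2)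

theorem testBit_code (l : List ℕ) (c : ℕ) :
    (code l).testBit c = true ↔ l.getD c 0 = 3 := by
  induction l generalizing c with
  | nil => simp [code]
  | cons x l ih =>
    cases c with
    | zero =>
      by_cases h : x = 3
      · subst h; simp [code, Nat.testBit_zero]
      · have : Nat.beq x 3 = false := by
          rw [Bool.eq_false_iff]; intro h'; exact h (Nat.eq_of_beq_eq_true h')
        simp [code, this, h, Nat.testBit_zero]
    | succ c =>
      rw [Nat.testBit_succ]
      have : code (x :: l) / 2 = code l := by
        simp only [code]
        cases Nat.beq x 3 <;> simp <;> omega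
      rw [this, ih]; simp

def wfP (P : List (List (ℕ × Bool))) : Prop := ∀ c < 10, ∀ q ∈ P.getD c [], q.1 < c

theorem okCell_append {P D I i} {l : List ℕ} {x y : ℕ}
    (h : ∀ q ∈ P.getD i [], q.1 < l.length) :
    okCell P D I i (l ++ [y]) x = okCell P D I i l x := by
  unfold okCell
  congr 1
  rw [Bool.eq_iff_iff, List.all_eq_true, List.all_eq_true]
  refine forall₂_congr fun q hq => ?_
  rw [List.getD_append _ _ _ _ (h q hq)]

theorem mem_layers {P D I} (hP : wfP P) (n : ℕ) (hn : n ≤ 10) (l : List ℕ) :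
    l ∈ layers P D I n ↔ l.length = n ∧
      ∀ i < n, l.getD i 0 < 4 ∧ okCell P D I i l (l.getD i 0) = true := by
  induction n generalizing l with
  | zero => simp [layers]
  | succ n ih =>
    simp only [layers, List.mem_flatMap, List.mem_map, List.mem_filter]
    constructor
    · rintro ⟨l', hl', x, ⟨hx, hok⟩, rfl⟩
      obtain ⟨hlen, hall⟩ := (ih (by omega) l').1 hl'
      refine ⟨by simp [hlen], fun i hi => ?_⟩
      have hq : ∀ q ∈ P.getD i [], q.1 < l'.length := fun q hq => by
        have := hP i (by omega) q hq; omega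
      rcases Nat.lt_or_ge i n with h | h
      · rw [List.getD_append _ _ _ _ (by omega), okCell_append hq]
        exact hall i h
      · have : i = n := by omega
        subst this
        have e : (l' ++ [x]).getD i 0 = x := by
          rw [List.getD_append_right _ _ _ _ (by omega)]; simp [hlen]
        rw [e, okCell_append hq]
        refine ⟨?_, hok⟩
        simp at hx; omega
    · rintro ⟨hlen, hall⟩
      have hne : l ≠ [] := by rintro rfl; simp at hlen
      obtain ⟨l', x, rfl⟩ : ∃ l' x, l = l' ++ [x] :=
        ⟨l.dropLast, l.getLast hne, (List.dropLast_append_getLast hne).symm⟩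
      have hlen' : l'.length = n := by simpa using hlen
      have hq : ∀ i ≤ n, ∀ q ∈ P.getD i [], q.1 < l'.length := fun i hi q hq => by
        have := hP i (by omega) q hq; omega
      have e : (l' ++ [x]).getD n 0 = x := by
        rw [List.getD_append_right _ _ _ _ (by omega)]; simp [hlen']
      refine ⟨l', (ih (by omega) l').2 ⟨hlen', fun i hi => ?_⟩, x, ⟨?_, ?_⟩, rfl⟩
      · have := hall i (by omega)
        rwa [List.getD_append _ _ _ _ (by omega), okCell_append (hq i (by omega))] at this
      · have := (hall n (by omega)).1
        rw [e] at this
        simp; omega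
      · have := (hall n (by omega)).2
        rwa [e, okCell_append (hq n le_rfl)] at this

theorem nodup_layers {P D I} (n : ℕ) : (layers P D I n).Nodup := by
  induction n with
  | zero => simp [layers]
  | succ n ih =>
    simp only [layers]
    rw [List.nodup_flatMap]
    refine ⟨fun l _ => ?_, ?_⟩
    · refine List.Nodup.map ?_ (List.Nodup.filter _ (by decide))
      intro x y h; simpa using h
    · refine ih.imp ?_
      intro a b hab
      simp only [Function.onFun, List.disjoint_left, List.mem_map]
      rintro _ ⟨x, _, rfl⟩ ⟨y, _, h⟩
      exact hab (List.append_inj' h rfl).1.symm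

/-! ### Peeling off one letter -/

def clip (k x : ℕ) : ℕ := min (x - 2 * k) 3
def trunc (k x : ℕ) : ℕ := if 2 * k + 2 < x then x else 0
def glue (k s t : ℕ) : ℕ := if s = 3 then t else if s = 0 then 0 else 2 * k + s

def clipList (k : ℕ) (e : ℕ → ℕ) : List ℕ := (List.range 10).map (fun c => clip k (e c))

theorem clipList_getD (k : ℕ) (e : ℕ → ℕ) (c : ℕ) (hc : c < 10) :
    (clipList k e).getD c 0 = clip k (e c) := by
  simp [clipList, List.getD_eq_getElem?_getD, hc]

theorem eq_clipList {l : List ℕ} (k : ℕ) (e : ℕ → ℕ) (hl : l.length = 10) :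
    clipList k e = l ↔ ∀ c < 10, clip k (e c) = l.getD c 0 := by
  constructor
  · rintro rfl c hc; rw [clipList_getD _ _ _ hc]
  · intro h
    apply List.ext_getElem
    · simp [clipList, hl]
    · intro i h1 h2
      have := h i (by omega)
      simp only [clipList, List.getElem_map, List.getElem_range]
      rw [this, List.getD_eq_getElem _ _ h2]

theorem rel4_iff (h : Bool) (x y : ℕ) : rel4 h x y = true ↔
    x < y ∨ (x = y ∧ (x = 0 ∨ x = 3 ∨ (h = true ∧ x = 2) ∨ (h = false ∧ x = 1))) := by
  cases h <;> simp [rel4, Nat.blt_eq] <;> tauto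

theorem okCell_iff {P D I i l x} : okCell P D I i l x = true ↔
    (Nat.testBit I i = true ↔ x ≠ 0) ∧ (D.getD i false = true → x ≠ 1) ∧
      ∀ q ∈ P.getD i [], rel4 q.2 (l.getD q.1 0) x = true := by
  have hb : ∀ a b : ℕ, Nat.beq a b = true ↔ a = b := fun a b => Nat.beq_eq ▸ Iff.rfl
  unfold okCell
  rw [Bool.and_eq_true, Bool.and_eq_true, List.all_eq_true, and_assoc]
  refine and_congr ?_ (and_congr ?_ Iff.rfl)
  · have := hb x 0
    cases Nat.testBit I i <;> cases h : Nat.beq x 0 <;> simp_all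
  · have := hb x 1
    cases D.getD i false <;> cases h : Nat.beq x 1 <;> simp_all

/-- splitting of the relation between two entries, both zero or larger than `2k` -/
theorem hv_split (h : Bool) (k x y : ℕ) (hx : x = 0 ∨ 2 * k < x) (hy : y = 0 ∨ 2 * k < y) :
    hv h x y ↔ rel4 h (clip k x) (clip k y) = true ∧ hv h (trunc k x) (trunc k y) := by
  rw [rel4_iff]
  unfold hv clip trunc
  cases h <;> simp only [Bool.false_eq_true, false_and, true_and, false_or, or_false,
    Bool.true_eq_false] <;> split_ifs <;> omega

theorem range_countP_congr {p q : ℕ → Bool} (h : ∀ c < 10, p c = q c) :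
    (List.range 10).countP p = (List.range 10).countP q :=
  List.countP_congr fun c hc => by rw [h c (List.mem_range.1 hc)]

theorem cnt_clipList (k : ℕ) (e : ℕ → ℕ) :
    cnt (clipList k e) = (List.range 10).countP (fun c => (e c + 1) / 2 = k + 1) := by
  unfold cnt clipList
  rw [List.countP_map]
  refine range_countP_congr fun c _ => ?_
  rw [Bool.eq_iff_iff]
  simp [clip]
  omega

theorem trunc_iff {k j x : ℕ} (hj : k + 1 ≤ j) :
    (trunc k x + 1) / 2 = j + 1 ↔ (x + 1) / 2 = j + 1 := by
  unfold trunc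
  split_ifs
  · rfl
  · constructor <;> intro h <;> first | omega | exact h.elim

theorem glue_clip {k x : ℕ} (hx : x = 0 ∨ 2 * k < x) : glue k (clip k x) (trunc k x) = x := by
  unfold glue clip trunc
  split_ifs <;> omega

/-- A filling decomposes into its first layer and the rest. -/
theorem fills_iff {P D m k I} (hP : wfP P) (e : ℕ → ℕ) :
    e ∈ Fills P D m k I ↔ (∀ c, 10 ≤ c → e c = 0) ∧ (∀ c, e c = 0 ∨ 2 * k < e c) ∧
      clipList k e ∈ layers P D I 10 ∧ cnt (clipList k e) = m (k + 1) ∧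
      (fun c => trunc k (e c)) ∈ Fills P D m (k + 1) (code (clipList k e)) := by
  have hlen : (clipList k e).length = 10 := by simp [clipList]
  rw [mem_layers hP 10 le_rfl]
  simp only [hlen, true_and, Fills, Set.mem_ofPred_eq, cnt_clipList]
  constructor
  · rintro ⟨h0, hV, hI, hm⟩
    have hlow : ∀ c, e c = 0 ∨ 2 * k < e c := by
      intro c
      rcases Nat.lt_or_ge c 10 with hc | hc
      · cases hb : I.testBit c
        · exact Or.inl ((hI c hc).2 hb)
        · exact Or.inr ((hI c hc).1 hb)
      · exact Or.inl (h0 c hc)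
    refine ⟨h0, hlow, ?_, hm k le_rfl, ?_, ?_, ?_, ?_⟩
    · intro i hi
      rw [clipList_getD _ _ _ hi, okCell_iff]
      refine ⟨by unfold clip; omega, ?_, ?_, ?_⟩
      · have := hI i hi
        cases hb : I.testBit i
        · have := this.2 hb; simp [clip, this]
        · have := this.1 hb; simp [clip]; omega
      · intro hd
        have := (hV i hi).1 hd
        unfold clip; omega
      · intro q hq
        have hq' := hP i hi q hq
        rw [clipList_getD _ _ _ (by omega)]
        exact ((hv_split q.2 k _ _ (hlow _) (hlow _)).1 ((hV i hi).2 q hq)).1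
    · intro c hc; simp [h0 c hc, trunc]
    · intro c hc
      refine ⟨fun hd => ?_, fun q hq => ?_⟩
      · have := (hV c hc).1 hd
        simp only [trunc]; split_ifs <;> omega
      · exact ((hv_split q.2 k _ _ (hlow _) (hlow _)).1 ((hV c hc).2 q hq)).2
    · intro c hc
      rw [← Bool.not_eq_true, testBit_code, clipList_getD _ _ _ hc]
      simp only [clip, trunc]; split_ifs <;> omega
    · intro j hj
      rw [← hm j (by omega)]
      refine range_countP_congr fun c _ => ?_
      exact decide_eq_decide.2 (trunc_iff (by omega))
  · rintro ⟨h0, hlow, hl, hk, -, hV, -, hm⟩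
    simp only [okCell_iff] at hl
    refine ⟨h0, ?_, ?_, ?_⟩
    · intro c hc
      refine ⟨fun hd => ?_, fun q hq => ?_⟩
      · have h1 := (hV c hc).1 hd
        have h2 := (hl c hc).2.2.1 hd
        rw [clipList_getD _ _ _ hc] at h2
        have := hlow c
        simp only [trunc, clip] at h1 h2
        split_ifs at h1 <;> omega
      · have hq' := hP c hc q hq
        rw [hv_split q.2 k _ _ (hlow _) (hlow _)]
        have h2 := (hl c hc).2.2.2 q hq
        rw [clipList_getD _ _ _ hc, clipList_getD _ _ _ (by omega)] at h2
        exact ⟨h2, (hV c hc).2 q hq⟩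
    · intro c hc
      have h2 := (hl c hc).2.1
      rw [clipList_getD _ _ _ hc] at h2
      have := hlow c
      constructor
      · intro hb
        have := h2.1 hb
        simp only [clip] at this; omega
      · intro hb
        have : ¬ (clip k (e c) ≠ 0) := fun h => by simp [h2.2 h] at hb
        simp only [clip] at this; omega
    · intro j hj
      rcases Nat.eq_or_lt_of_le hj with rfl | hj
      · exact hk
      · rw [← hm j hj]
        refine range_countP_congr fun c _ => ?_
        exact decide_eq_decide.2 (trunc_iff (by omega)).symm

def layersOf (P : List (List (ℕ × Bool))) (D : List Bool) (I a : ℕ) : List (List ℕ) :=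
  (layers P D I 10).filter (fun l => cnt l = a)

def firstLayer (P : List (List (ℕ × Bool))) (D : List Bool) (m : ℕ → ℕ) (k I : ℕ) (hP : wfP P) (e : Fills P D m k I) :
    {l // l ∈ layersOf P D I (m (k + 1))} :=
  ⟨clipList k e, by
    have := (fills_iff hP e.1).1 e.2
    simp only [layersOf, List.mem_filter, decide_eq_true_eq]
    exact ⟨this.2.2.1, this.2.2.2.1⟩⟩

theorem glue_spec {P D m k I} (hP : wfP P) {l : List ℕ} (hl : l ∈ layersOf P D I (m (k + 1)))
    {t : ℕ → ℕ} (ht : t ∈ Fills P D m (k + 1) (code l)) :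
    (fun c => glue k (l.getD c 0) (t c)) ∈ Fills P D m k I ∧
      clipList k (fun c => glue k (l.getD c 0) (t c)) = l ∧
      (fun c => trunc k (glue k (l.getD c 0) (t c))) = t := by
  simp only [layersOf, List.mem_filter, decide_eq_true_eq] at hl
  obtain ⟨hl, hc⟩ := hl
  obtain ⟨hlen, h4⟩ := (mem_layers hP 10 le_rfl l).1 hl
  have hout : ∀ c, 10 ≤ c → l.getD c 0 = 0 := fun c hc =>
    List.getD_eq_default _ _ (by omega)
  have htl : ∀ c, (l.getD c 0 = 3 ∧ 2 * (k + 1) < t c) ∨ (l.getD c 0 < 3 ∧ t c = 0) := by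
    intro c
    rcases Nat.lt_or_ge c 10 with hc | hc
    · have h := ht.2.2.1 c hc
      rw [← Bool.not_eq_true, testBit_code] at h
      have := (h4 c hc).1
      omega
    · exact Or.inr ⟨by rw [hout c hc]; omega, ht.1 c hc⟩
  have hclip : ∀ c, clip k (glue k (l.getD c 0) (t c)) = l.getD c 0 := by
    intro c
    have := htl c
    simp only [clip, glue]; split_ifs <;> omega
  have htr : ∀ c, trunc k (glue k (l.getD c 0) (t c)) = t c := by
    intro c
    have := htl c
    simp only [trunc, glue]; split_ifs <;> omega
  have e1 : clipList k (fun c => glue k (l.getD c 0) (t c)) = l :=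
    (eq_clipList k _ hlen).2 fun c _ => hclip c
  have e2 : (fun c => trunc k (glue k (l.getD c 0) (t c))) = t := funext htr
  refine ⟨?_, e1, e2⟩
  rw [fills_iff hP, e1, e2]
  refine ⟨fun c hc => ?_, fun c => ?_, hl, hc, ht⟩
  · simp only [hout c hc, glue]; rfl
  · have := htl c
    simp only [glue]; split_ifs <;> omega

def fiberEquiv (P : List (List (ℕ × Bool))) (D : List Bool) (m : ℕ → ℕ) (k I : ℕ) (hP : wfP P) (l : {l // l ∈ layersOf P D I (m (k + 1))}) :
    {e : Fills P D m k I // firstLayer P D m k I hP e = l} ≃ Fills P D m (k + 1) (code l.1) where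
  toFun e := ⟨fun c => trunc k (e.1.1 c), by
    have := ((fills_iff hP e.1.1).1 e.1.2).2.2.2.2
    have h := congrArg Subtype.val e.2
    simp only [firstLayer] at h
    rwa [h] at this⟩
  invFun t := ⟨⟨fun c => glue k (l.1.getD c 0) (t.1 c), (glue_spec hP l.2 t.2).1⟩,
    Subtype.ext (glue_spec hP l.2 t.2).2.1⟩
  left_inv e := by
    apply Subtype.ext; apply Subtype.ext
    funext c
    have h := congrArg Subtype.val e.2
    simp only [firstLayer] at h
    have hf := (fills_iff hP e.1.1).1 e.1.2
    simp only
    rcases Nat.lt_or_ge c 10 with hc | hc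
    · rw [← h, clipList_getD _ _ _ hc]
      exact glue_clip (hf.2.1 c)
    · have h0 := hf.1 c hc
      have : l.1.getD c 0 = 0 := by
        rw [← h]; exact List.getD_eq_default _ _ (by simp [clipList]; omega)
      rw [this, h0]; simp [glue]
  right_inv t := Subtype.ext (glue_spec hP l.2 t.2).2.2

def peelEquiv (P : List (List (ℕ × Bool))) (D : List Bool) (m : ℕ → ℕ) (k I : ℕ) (hP : wfP P) :
    Fills P D m k I ≃
      Σ l : {l // l ∈ layersOf P D I (m (k + 1))}, Fills P D m (k + 1) (code l.1) :=
  (Equiv.sigmaFiberEquiv (firstLayer P D m k I hP)).symm.trans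
    (Equiv.sigmaCongrRight fun l => fiberEquiv P D m k I hP l)

theorem fills_zero {P D m k I} (hm : ∀ j, k < j → m j = 0) (e : ℕ → ℕ)
    (he : e ∈ Fills P D m k I) : (∀ c < 10, I.testBit c = false) ∧ e = 0 := by
  obtain ⟨h0, -, hI, hc⟩ := he
  have hz : ∀ c < 10, I.testBit c = false := by
    intro c hc'
    by_contra hb
    rw [Bool.not_eq_false] at hb
    have h1 := (hI c hc').1 hb
    obtain ⟨j, hj⟩ : ∃ j, (e c + 1) / 2 = j + 1 := ⟨(e c + 1) / 2 - 1, by omega⟩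
    have h2 := hc j (by omega)
    rw [hm (j + 1) (by omega), List.countP_eq_zero] at h2
    exact h2 c (List.mem_range.2 hc') (by simpa using hj)
  refine ⟨hz, funext fun c => ?_⟩
  rcases Nat.lt_or_ge c 10 with hc | hc
  · exact (hI c hc).2 (hz c hc)
  · exact h0 c hc

theorem zero_mem_fills {P D m k I} (hm : ∀ j, k < j → m j = 0)
    (hI : ∀ c < 10, I.testBit c = false) : (0 : ℕ → ℕ) ∈ Fills P D m k I := by
  refine ⟨fun _ _ => rfl, fun c _ => ⟨fun _ => rfl, fun q _ => ?_⟩, fun c hc => ?_, fun j hj => ?_⟩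
  · unfold hv; cases q.2 <;> simp
  · simp [hI c hc]
  · rw [hm (j + 1) (by omega)]; simp

theorem card_base {P D m} {k I : ℕ} (hm : ∀ j, k < j → m j = 0) :
    Nat.card (Fills P D m k I) = if (∀ c : ℕ, c < 10 → I.testBit c = false) then 1 else 0 := by
  split_ifs with h
  · have : Fills P D m k I = {0} := by
      ext e
      refine ⟨fun he => (fills_zero hm e he).2, ?_⟩
      rintro rfl
      exact zero_mem_fills hm h
    rw [this]; simp
  · have : IsEmpty (Fills P D m k I) := ⟨fun e => h (fills_zero hm e.1 e.2).1⟩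
    simp

theorem finite_fills {P D m} (hP : wfP P) (r k I : ℕ) (hm : ∀ j, k + r < j → m j = 0) :
    Finite (Fills P D m k I) := by
  induction r generalizing k I with
  | zero =>
    have : Subsingleton (Fills P D m k I) := ⟨fun a b => Subtype.ext <| by
      rw [(fills_zero hm a.1 a.2).2, (fills_zero hm b.1 b.2).2]⟩
    infer_instance
  | succ r ih =>
    have : ∀ l : {l // l ∈ layersOf P D I (m (k + 1))},
        Finite (Fills P D m (k + 1) (code l.1)) :=
      fun l => ih _ _ fun j hj => hm j (by omega)
    have : Finite {l // l ∈ layersOf P D I (m (k + 1))} :=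
      @Finite.of_fintype _ (Fintype.subtype (layersOf P D I (m (k + 1))).toFinset
        (fun x => List.mem_toFinset))
    exact Finite.of_equiv _ (peelEquiv P D m k I hP).symm

theorem card_step {P D m} (hP : wfP P) (r k I : ℕ) (hm : ∀ j, k + (r + 1) < j → m j = 0) :
    Nat.card (Fills P D m k I) =
      ((layersOf P D I (m (k + 1))).map (fun l => Nat.card (Fills P D m (k + 1) (code l)))).sum := by
  have h1 : ∀ l : {l // l ∈ layersOf P D I (m (k + 1))},
      Finite (Fills P D m (k + 1) (code l.1)) :=
    fun l => finite_fills hP r _ _ fun j hj => hm j (by omega)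
  have hnd : (layersOf P D I (m (k + 1))).Nodup := (nodup_layers 10).filter _
  rw [← List.sum_toFinset (fun l => Nat.card (Fills P D m (k + 1) (code l))) hnd,
    Nat.card_congr (peelEquiv P D m k I hP)]
  let _ : Fintype {l // l ∈ layersOf P D I (m (k + 1))} :=
    Fintype.subtype (layersOf P D I (m (k + 1))).toFinset (fun x => List.mem_toFinset)
  rw [Nat.card_sigma]
  symm
  exact Finset.sum_subtype _ (fun x => List.mem_toFinset)
    (fun l => Nat.card (Fills P D m (k + 1) (code l)))

/-! ### The certificate

`G` is an abstract weighted automaton, given by the table `M`; the number of fillings of the shape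
`I` is a sum of values of `G`, given by the table `T`. -/

def lookupT {α : Type} (T : List (ℕ × List α)) (I : ℕ) : List α :=
  match T with
  | [] => []
  | t :: T => cond (Nat.beq t.1 I) t.2 (lookupT T I)

def G (M : List (ℕ × List (ℕ × ℕ))) (m : ℕ → ℕ) : ℕ → ℕ → ℕ → ℕ
  | 0, _, s => if s = 0 then 1 else 0
  | r + 1, k, s =>
    (((lookupT M s).filter (fun p => p.1 = m (k + 1))).map (fun p => G M m r (k + 1) p.2)).sum

def certRow (P : List (List (ℕ × Bool))) (D : List Bool) (M : List (ℕ × List (ℕ × ℕ)))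
    (T : List (ℕ × List ℕ)) (I : ℕ) : Bool :=
  ((lookupT T I).count 0 == cond ((List.range 10).all (fun c => !Nat.testBit I c)) 1 0) &&
  (layers P D I 10).all (fun l => (T.map Prod.fst).elem (code l)) &&
  ((layers P D I 10).flatMap (fun l => (lookupT T (code l)).map (fun s => (cnt l, s)))).isPerm
    ((lookupT T I).flatMap (fun s => lookupT M s))

def cert (P : List (List (ℕ × Bool))) (D : List Bool) (M : List (ℕ × List (ℕ × ℕ)))
    (T : List (ℕ × List ℕ)) : Bool :=
  (T.map Prod.fst).all (certRow P D M T)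

theorem sum_count_zero (L : List ℕ) :
    (L.map (fun s => if s = 0 then 1 else 0)).sum = L.count 0 := by
  induction L with
  | nil => rfl
  | cons a L ih =>
    rw [List.map_cons, List.sum_cons, ih, List.count_cons]
    by_cases h : a = 0 <;> simp [h, add_comm]

theorem sum_flatMap_filter {α β : Type} (L : List α) (f : α → List (ℕ × β)) (a : ℕ) (g : β → ℕ) :
    (((L.flatMap f).filter (fun p => p.1 = a)).map (fun p => g p.2)).sum =
      (L.map (fun x => (((f x).filter (fun p => p.1 = a)).map (fun p => g p.2)).sum)).sum := by
  induction L with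
  | nil => rfl
  | cons x L ih => simp [List.flatMap_cons, List.filter_append, ih]

theorem sum_filter_ite {α : Type} (L : List α) (c : α → ℕ) (a : ℕ) (g : α → ℕ) :
    ((L.filter (fun x => c x = a)).map g).sum =
      (L.map (fun x => if c x = a then g x else 0)).sum := by
  induction L with
  | nil => rfl
  | cons x L ih => by_cases h : c x = a <;> simp [h, ih]

theorem card_eq_G {P D M T m} (hP : wfP P) (hc : cert P D M T = true) (r k : ℕ)
    (hm : ∀ j, k + r < j → m j = 0) (I : ℕ) (hI : I ∈ T.map Prod.fst) :
    Nat.card (Fills P D m k I) = ((lookupT T I).map (G M m r k)).sum := by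
  have hrow : ∀ I ∈ T.map Prod.fst, certRow P D M T I = true := List.all_eq_true.1 hc
  induction r generalizing k I with
  | zero =>
    rw [card_base (k := k) hm]
    have h := hrow I hI
    simp only [certRow, Bool.and_eq_true, beq_iff_eq] at h
    have hG : G M m 0 k = fun s => if s = 0 then 1 else 0 := by funext s; rfl
    rw [hG, sum_count_zero, h.1.1]
    have : ((List.range 10).all (fun c => !Nat.testBit I c)) = true ↔
        ∀ c < 10, I.testBit c = false := by
      rw [List.all_eq_true]; simp only [List.mem_range, Bool.not_eq_true']
    by_cases hz : ∀ c < 10, I.testBit c = false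
    · rw [if_pos hz, this.2 hz]; rfl
    · rw [if_neg hz, Bool.eq_false_iff.2 (fun h => hz (this.1 h))]; rfl
  | succ r ih =>
    rw [card_step hP r k I hm]
    have h := hrow I hI
    simp only [certRow, Bool.and_eq_true, beq_iff_eq] at h
    have hmem := List.all_eq_true.1 h.1.2
    have hperm := List.isPerm_iff.1 h.2
    have hs := ((hperm.filter (fun p => p.1 = m (k + 1))).map
      (fun p => G M m r (k + 1) p.2)).sum_eq
    rw [sum_flatMap_filter, sum_flatMap_filter] at hs
    have hG : G M m (r + 1) k = fun s => (((lookupT M s).filter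
        (fun p => p.1 = m (k + 1))).map (fun p => G M m r (k + 1) p.2)).sum := by
      funext s; rfl
    rw [hG, ← hs, layersOf, sum_filter_ite]
    refine congrArg List.sum (List.map_congr_left fun l hl => ?_)
    have hin : code l ∈ T.map Prod.fst := List.elem_iff.1 (hmem l hl)
    rw [ih (k + 1) (fun j hj => hm j (by omega)) _ hin]
    by_cases hcn : cnt l = m (k + 1)
    · simp [hcn, List.filter_map, Function.comp_def]
    · simp [hcn, List.filter_map, Function.comp_def]

/-! ### From tableaux to fillings -/

/-- Fillings of a set of cells in the plane. -/
def Tabs (C : Finset (ℕ × ℕ)) (dg : ℕ × ℕ → Prop) (m : ℕ → ℕ) : Set (ℕ × ℕ → ℕ) :=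
  {E | (∀ c ∉ C, E c = 0) ∧ (∀ c ∈ C, 1 ≤ E c) ∧
    (∀ i j, (i, j) ∈ C → (i, j + 1) ∈ C → hv true (E (i, j)) (E (i, j + 1))) ∧
    (∀ i j, (i, j) ∈ C → (i + 1, j) ∈ C → hv false (E (i, j)) (E (i + 1, j))) ∧
    (∀ c ∈ C, dg c → E c % 2 = 0) ∧
    ∀ k, (C.filter (fun c => (E c + 1) / 2 = k)).card = m k}

/-- The list `L` of cells describes `C`, and `P`, `D` describe neighbours and diagonal. -/
structure Describes (L : List (ℕ × ℕ)) (C : Finset (ℕ × ℕ)) (dg : ℕ × ℕ → Prop)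
    (P : List (List (ℕ × Bool))) (D : List Bool) : Prop where
  mem : ∀ i < 10, L.getD i (0, 0) ∈ C
  inv : ∀ c ∈ C, L.idxOf c < 10 ∧ L.getD (L.idxOf c) (0, 0) = c
  idx : ∀ i < 10, L.idxOf (L.getD i (0, 0)) = i
  row : ∀ i < 10, ∀ j < 10, L.getD j (0, 0) = ((L.getD i (0, 0)).1, (L.getD i (0, 0)).2 + 1) →
    (i, true) ∈ P.getD j []
  col : ∀ i < 10, ∀ j < 10, L.getD j (0, 0) = ((L.getD i (0, 0)).1 + 1, (L.getD i (0, 0)).2) →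
    (i, false) ∈ P.getD j []
  nbr : ∀ j < 10, ∀ q ∈ P.getD j [], q.1 < j ∧ L.getD j (0, 0) =
    cond q.2 ((L.getD q.1 (0, 0)).1, (L.getD q.1 (0, 0)).2 + 1)
      ((L.getD q.1 (0, 0)).1 + 1, (L.getD q.1 (0, 0)).2)
  diag : ∀ i < 10, (D.getD i false = true ↔ dg (L.getD i (0, 0)))

theorem Describes.card {L C dg P D} (h : Describes L C dg P D) (p : ℕ → Prop) [DecidablePred p]
    (E : ℕ × ℕ → ℕ) (e : ℕ → ℕ) (he : ∀ i < 10, e i = E (L.getD i (0, 0))) :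
    (C.filter (fun c => p (E c))).card = (List.range 10).countP (fun i => p (e i)) := by
  have : (List.range 10).countP (fun i => p (e i)) =
      ((Finset.range 10).filter (fun i => p (e i))).card := by
    rw [List.countP_eq_length_filter]; rfl
  rw [this]
  refine Finset.card_nbij' (fun c => L.idxOf c) (fun i => L.getD i (0, 0)) ?_ ?_ ?_ ?_
  · intro c hc
    simp only [Finset.coe_filter, Set.mem_ofPred_eq, Finset.mem_range] at hc ⊢
    have := h.inv c hc.1
    rw [he _ this.1, this.2]
    exact ⟨this.1, hc.2⟩
  · intro i hi
    simp only [Finset.coe_filter, Set.mem_ofPred_eq, Finset.mem_range] at hi ⊢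
    rw [← he _ hi.1]
    exact ⟨h.mem i hi.1, hi.2⟩
  · intro c hc
    simp only [Finset.coe_filter, Set.mem_ofPred_eq] at hc
    exact (h.inv c hc.1).2
  · intro i hi
    simp only [Finset.coe_filter, Set.mem_ofPred_eq, Finset.mem_range] at hi
    exact h.idx i hi.1

theorem testBit_full (c : ℕ) (hc : c < 10) : Nat.testBit 1023 c = true := by
  interval_cases c <;> rfl

def tabsEquiv {L C dg P D m} (h : Describes L C dg P D) (h0 : m 0 = 0) :
    Tabs C dg m ≃ Fills P D m 0 1023 where
  toFun E := ⟨fun i => if i < 10 then E.1 (L.getD i (0, 0)) else 0, by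
    obtain ⟨E, hout, hpos, hrow, hcol, hdg, hm⟩ := E
    refine ⟨fun c hc => if_neg (by omega), fun c hc => ⟨fun hd => ?_, fun q hq => ?_⟩,
      fun c hc => ?_, fun j _ => ?_⟩
    · simp only [hc, if_true]
      exact hdg _ (h.mem c hc) ((h.diag c hc).1 hd)
    · obtain ⟨hlt, heq⟩ := h.nbr c hc q hq
      have hq10 : q.1 < 10 := by omega
      simp only [hc, hq10, if_true]
      have m1 := h.mem _ hq10
      have m2 := h.mem _ hc
      rcases hb : q.2 with _ | _
      · rw [hb, cond_false] at heq
        rw [heq] at m2 ⊢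
        exact hcol _ _ m1 m2
      · rw [hb, cond_true] at heq
        rw [heq] at m2 ⊢
        exact hrow _ _ m1 m2
    · rw [testBit_full c hc]
      simp only [hc, if_true, Bool.true_eq_false, false_imp_iff, and_true]
      intro _
      have := hpos _ (h.mem c hc)
      omega
    · rw [← hm (j + 1)]
      exact (h.card (fun x => (x + 1) / 2 = j + 1) E _ (fun i hi => if_pos hi)).symm⟩
  invFun e := ⟨fun c => if c ∈ C then e.1 (L.idxOf c) else 0, by
    obtain ⟨e, hout, hV, hI, hm⟩ := e
    have hpos : ∀ i < 10, 0 < e i := fun i hi => by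
      have := (hI i hi).1 (testBit_full i hi); omega
    refine ⟨fun c hc => if_neg hc, fun c hc => ?_, fun i j h1 h2 => ?_, fun i j h1 h2 => ?_,
      fun c hc hd => ?_, fun k => ?_⟩
    · simp only [hc, if_true]
      exact hpos _ (h.inv c hc).1
    · simp only [h1, h2, if_true]
      obtain ⟨a1, a2⟩ := h.inv _ h1
      obtain ⟨b1, b2⟩ := h.inv _ h2
      exact (hV _ b1).2 _ (h.row _ a1 _ b1 (by rw [a2, b2]))
    · simp only [h1, h2, if_true]
      obtain ⟨a1, a2⟩ := h.inv _ h1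
      obtain ⟨b1, b2⟩ := h.inv _ h2
      exact (hV _ b1).2 _ (h.col _ a1 _ b1 (by rw [a2, b2]))
    · simp only [hc, if_true]
      obtain ⟨a1, a2⟩ := h.inv _ hc
      exact (hV _ a1).1 ((h.diag _ a1).2 (by rwa [a2]))
    · rw [h.card (fun x => (x + 1) / 2 = k) _ e (fun i hi => by
        simp only [h.mem i hi, if_true, h.idx i hi])]
      cases k with
      | zero =>
        rw [h0, List.countP_eq_zero]
        intro i hi
        have := hpos i (List.mem_range.1 hi)
        simp only [decide_eq_true_eq]; omega
      | succ k => exact hm k (Nat.zero_le _)⟩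
  left_inv E := by
    apply Subtype.ext
    funext c
    simp only
    by_cases hc : c ∈ C
    · obtain ⟨a1, a2⟩ := h.inv c hc
      rw [if_pos hc, if_pos a1, a2]
    · rw [if_neg hc, E.2.1 c hc]
  right_inv e := by
    apply Subtype.ext
    funext i
    simp only
    by_cases hi : i < 10
    · rw [if_pos hi, if_pos (h.mem i hi), h.idx i hi]
    · rw [if_neg hi, e.2.1 i (by omega)]

theorem tabs_empty {C dg m} (h0 : m 0 ≠ 0) : Nat.card (Tabs C dg m) = 0 := by
  have : IsEmpty (Tabs C dg m) := ⟨fun E => by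
    obtain ⟨E, hout, hpos, hrow, hcol, hdg, hm⟩ := E
    apply h0
    rw [← hm 0, Finset.card_eq_zero, Finset.filter_eq_empty_iff]
    intro c hc
    have := hpos c hc
    omega⟩
  simp

def skewEquiv (lam mu : List ℕ) (m : ℕ → ℕ) :
    {T : SkewSSYT lam mu //
      ∀ k, ((skewCells lam mu).filter (fun c => T.entry c = k)).card = m k} ≃
    Tabs (skewCells lam mu) (fun _ => True) m where
  toFun T := ⟨fun c => 2 * T.1.entry c, by
    obtain ⟨⟨E, hout, hpos, hrow, hcol⟩, hm⟩ := T
    refine ⟨fun c hc => by simp [hout c hc], fun c hc => by have := hpos c hc; simp only; omega,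
      fun i j h1 h2 => ?_, fun i j h1 h2 => ?_, fun c _ _ => by simp only; omega, fun k => ?_⟩
    · have := hrow i j h1 h2
      simp only [hv, true_and]; omega
    · have := hcol i j h1 h2
      simp only [hv]; omega
    · rw [← hm k]
      congr 1
      refine Finset.filter_congr fun c _ => ?_
      simp only; omega⟩
  invFun E := ⟨⟨fun c => E.1 c / 2, fun c hc => by simp [E.2.1 c hc],
      fun c hc => by
        have h1 := E.2.2.1 c hc
        have h2 := E.2.2.2.2.2.1 c hc trivial
        omega,
      fun i j h1 h2 => by
        have := E.2.2.2.1 i j h1 h2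
        simp only [hv] at this; omega,
      fun i j h1 h2 => by
        have := E.2.2.2.2.1 i j h1 h2
        have e1 := E.2.2.2.2.2.1 _ h1 trivial
        have e2 := E.2.2.2.2.2.1 _ h2 trivial
        have p1 := E.2.2.1 _ h1
        simp only [hv, Bool.false_eq_true, false_and, false_or] at this; omega⟩, fun k => by
      rw [← E.2.2.2.2.2.2 k]
      congr 1
      refine Finset.filter_congr fun c hc => ?_
      have := E.2.2.2.2.2.1 c hc trivial
      simp only; omega⟩
  left_inv T := by
    obtain ⟨⟨E, hout, hpos, hrow, hcol⟩, hm⟩ := T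
    simp
  right_inv E := by
    apply Subtype.ext
    funext c
    simp only
    by_cases hc : c ∈ skewCells lam mu
    · have := E.2.2.2.2.2.1 c hc trivial
      omega
    · rw [E.2.1 c hc]

def shiftedEquiv (lam : List ℕ) (m : ℕ → ℕ) :
    {S : ShiftedSSYT lam //
      ∀ k, ((shiftedCells lam).filter (fun c => (S.entry c + 1) / 2 = k)).card = m k} ≃
    Tabs (shiftedCells lam) (fun c => c.1 = c.2) m where
  toFun T := ⟨T.1.entry, by
    obtain ⟨⟨E, hout, hpos, hrow, hrowp, hcol, hcolp, hdiag⟩, hm⟩ := T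
    refine ⟨hout, hpos, fun i j h1 h2 => ?_, fun i j h1 h2 => ?_, ?_, hm⟩
    · have a := hrow i j h1 h2
      have b := hrowp i j h1 h2
      rw [Nat.even_iff] at b
      simp only [hv, true_and]; omega
    · have a := hcol i j h1 h2
      have b := hcolp i j h1 h2
      rw [Nat.odd_iff] at b
      simp only [hv, true_and]; omega
    · rintro ⟨i, j⟩ hc hd
      simp only at hd
      subst hd
      exact Nat.even_iff.1 (hdiag i hc)⟩
  invFun E := ⟨⟨E.1, E.2.1, E.2.2.1,
      fun i j h1 h2 => by
        have := E.2.2.2.1 i j h1 h2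
        simp only [hv] at this; omega,
      fun i j h1 h2 => by
        have := E.2.2.2.1 i j h1 h2
        rw [Nat.even_iff]
        simp only [hv, true_and] at this
        simp at this
        omega,
      fun i j h1 h2 => by
        have := E.2.2.2.2.1 i j h1 h2
        simp only [hv] at this; omega,
      fun i j h1 h2 => by
        have := E.2.2.2.2.1 i j h1 h2
        have p1 := E.2.2.1 _ h1
        rw [Nat.odd_iff]
        simp only [hv, true_and] at this
        simp at this
        omega,
      fun i h => Nat.even_iff.2 (E.2.2.2.2.2.1 (i, i) h rfl)⟩, E.2.2.2.2.2.2⟩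
  left_inv T := rfl
  right_inv E := rfl

/-! ### The tables -/

/-- Transitions of the abstract automaton: its states number the strict partitions. -/
def tabM : List (ℕ × List (ℕ × ℕ)) := [
  (0, [(0, 0)]), (1, [(1, 0), (0, 1)]), (2, [(2, 0), (1, 1), (1, 1), (0, 2)]),
  (3, [(3, 0), (2, 1), (2, 1), (1, 2), (1, 2), (0, 3)]), (4, [(2, 1), (1, 2), (0, 4)]),
  (5, [(4, 0), (3, 1), (3, 1), (2, 2), (2, 2), (1, 3), (1, 3), (0, 5)]),
  (6, [(3, 1), (2, 2), (2, 2), (1, 3), (1, 4), (1, 4), (0, 6)]),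
  (7, [(5, 0), (4, 1), (4, 1), (3, 2), (3, 2), (2, 3), (2, 3), (1, 5), (1, 5), (0, 7)]),
  (8, [(4, 1), (3, 2), (3, 2), (2, 3), (2, 3), (2, 4), (2, 4), (1, 5), (1, 6), (1, 6), (0, 8)]),
  (9, [(3, 2), (2, 3), (2, 4), (2, 4), (1, 6), (1, 6), (0, 9)]),
  (11, [(5, 1), (4, 2), (4, 2), (3, 3), (3, 3), (3, 4), (3, 4), (2, 5), (2, 5), (2, 6), (2, 6), (1, 7), (1, 8), (1, 8), (0, 11)]),
  (12, [(4, 2), (3, 3), (3, 3), (3, 4), (3, 4), (2, 5), (2, 6), (2, 6), (2, 6), (2, 6), (1, 8), (1, 8), (1, 9), (1, 9), (0, 12)]),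
  (13, [(3, 4), (2, 6), (1, 9), (0, 13)]),
  (16, [(5, 2), (4, 3), (4, 3), (4, 4), (4, 4), (3, 5), (3, 5), (3, 6), (3, 6), (3, 6), (3, 6), (2, 7), (2, 8), (2, 8), (2, 8), (2, 8), (2, 9), (2, 9), (1, 11), (1, 11), (1, 12), (1, 12), (0, 16)]),
  (17, [(4, 3), (3, 5), (3, 6), (3, 6), (2, 8), (2, 8), (2, 9), (2, 9), (1, 12), (1, 12), (0, 17)]),
  (18, [(4, 4), (3, 6), (3, 6), (2, 8), (2, 9), (2, 9), (1, 12), (1, 13), (1, 13), (0, 18)]),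
  (22, [(5, 3), (4, 5), (4, 5), (4, 6), (4, 6), (3, 7), (3, 8), (3, 8), (3, 8), (3, 8), (3, 9), (3, 9), (2, 11), (2, 11), (2, 12), (2, 12), (2, 12), (2, 12), (1, 16), (1, 16), (1, 17), (1, 17), (0, 22)]),
  (23, [(5, 4), (4, 6), (4, 6), (3, 8), (3, 8), (3, 9), (3, 9), (2, 11), (2, 12), (2, 12), (2, 13), (2, 13), (1, 16), (1, 18), (1, 18), (0, 23)]),
  (24, [(4, 6), (3, 8), (3, 9), (3, 9), (2, 12), (2, 12), (2, 13), (2, 13), (1, 17), (1, 18), (1, 18), (0, 24)]),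
  (30, [(5, 5), (4, 7), (4, 8), (4, 8), (3, 11), (3, 11), (3, 12), (3, 12), (2, 16), (2, 16), (2, 17), (2, 17), (1, 22), (1, 22), (0, 30)]),
  (31, [(5, 6), (4, 8), (4, 8), (4, 9), (4, 9), (3, 11), (3, 12), (3, 12), (3, 12), (3, 12), (3, 13), (3, 13), (2, 16), (2, 16), (2, 17), (2, 17), (2, 18), (2, 18), (2, 18), (2, 18), (1, 22), (1, 23), (1, 23), (1, 24), (1, 24), (0, 31)]),
  (32, [(4, 9), (3, 12), (3, 13), (3, 13), (2, 17), (2, 18), (2, 18), (1, 24), (1, 24), (0, 32)]),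
  (40, [(5, 8), (4, 11), (4, 12), (4, 12), (3, 16), (3, 16), (3, 17), (3, 17), (3, 18), (3, 18), (2, 22), (2, 22), (2, 23), (2, 23), (2, 24), (2, 24), (1, 30), (1, 31), (1, 31), (0, 40)]),
  (41, [(5, 9), (4, 12), (4, 12), (4, 13), (4, 13), (3, 16), (3, 17), (3, 17), (3, 18), (3, 18), (3, 18), (3, 18), (2, 22), (2, 23), (2, 23), (2, 24), (2, 24), (2, 24), (2, 24), (1, 31), (1, 31), (1, 32), (1, 32), (0, 41)])]

def cellsA : List (ℕ × ℕ) := [(0, 3), (0, 4), (1, 2), (1, 3), (2, 0), (2, 1), (2, 2), (3, 0), (3, 1), (4, 0)]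

def nbrsA : List (List (ℕ × Bool)) := [
  [], [(0, true)], [], [(0, false), (2, true)], [], [(4, true)], [(2, false), (5, true)],
  [(4, false)], [(5, false), (7, true)], [(7, false)]]

def diagA : List Bool := [true, true, true, true, true, true, true, true, true, true]

def tabA : List (ℕ × List ℕ) := [
  (1023, [40, 41]), (1022, [31, 32]), (1020, [24]), (1019, [31]), (1018, [23, 24]), (1016, [18]),
  (1010, [18]), (1008, [13]), (1007, [30, 31, 31, 32]), (1006, [22, 23, 24, 24]),
  (1004, [17, 18]), (1003, [22, 23, 24]), (1002, [16, 17, 18, 18]), (1000, [12, 13]),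
  (994, [12, 13]), (992, [9]), (975, [22, 23, 24]), (974, [16, 17, 18]), (972, [12]),
  (971, [16, 17, 18]), (970, [11, 12, 12, 13]), (968, [8, 9]), (962, [8, 9]), (960, [6]),
  (907, [12]), (906, [8, 9]), (904, [6]), (898, [6]), (896, [4]), (879, [22, 23, 24, 24]),
  (878, [16, 17, 18, 18]), (876, [12, 13]), (875, [16, 17, 18]), (874, [11, 12, 12, 13]),
  (872, [8, 9]), (866, [8, 9]), (864, [6]), (847, [16, 17, 18, 18]), (846, [11, 12, 12, 13]),
  (844, [8, 9]), (843, [11, 12, 12, 13]), (842, [7, 8, 8, 8, 9, 9]), (840, [5, 6, 6]),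
  (834, [5, 6, 6]), (832, [3, 4]), (779, [8, 9]), (778, [5, 6, 6]), (776, [3, 4]), (770, [3, 4]),
  (768, [2]), (591, [12, 13]), (590, [8, 9]), (588, [6]), (587, [8, 9]), (586, [5, 6, 6]),
  (584, [3, 4]), (578, [3, 4]), (576, [2]), (523, [6]), (522, [3, 4]), (520, [2]), (514, [2]),
  (512, [1]), (367, [17, 18]), (366, [12, 13]), (364, [9]), (363, [12]), (362, [8, 9]),
  (360, [6]), (354, [6]), (352, [4]), (335, [12, 13]), (334, [8, 9]), (332, [6]), (331, [8, 9]),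
  (330, [5, 6, 6]), (328, [3, 4]), (322, [3, 4]), (320, [2]), (267, [6]), (266, [3, 4]),
  (264, [2]), (258, [2]), (256, [1]), (79, [9]), (78, [6]), (76, [4]), (75, [6]), (74, [3, 4]),
  (72, [2]), (66, [2]), (64, [1]), (11, [4]), (10, [2]), (8, [1]), (2, [1]), (0, [0])]

def cellsB : List (ℕ × ℕ) := [(0, 0), (0, 1), (0, 2), (0, 3), (0, 4), (1, 1), (1, 2), (1, 3), (1, 4), (2, 2)]

def nbrsB : List (List (ℕ × Bool)) := [
  [], [(0, true)], [(1, true)], [(2, true)], [(3, true)], [(1, false)], [(2, false), (5, true)],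
  [(3, false), (6, true)], [(4, false), (7, true)], [(6, false)]]

def diagB : List Bool := [true, false, false, false, false, true, false, false, false, true]

def tabB : List (ℕ × List ℕ) := [
  (1023, [40]), (1022, [30, 31, 31]), (1020, [22, 22, 23, 23, 24, 24]),
  (1016, [16, 16, 17, 17, 18, 18]), (1008, [11, 12, 12]), (992, [8]),
  (988, [16, 16, 17, 17, 18, 18, 18, 18]),
  (984, [11, 11, 12, 12, 12, 12, 12, 12, 13, 13, 13, 13]), (976, [7, 8, 8, 8, 8, 9, 9, 9, 9]),
  (960, [5, 6, 6]), (920, [8, 8, 8, 8, 9, 9, 9, 9]), (912, [5, 5, 6, 6, 6, 6, 6, 6]),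
  (896, [3, 3, 4, 4]), (784, [3, 3, 4, 4]), (768, [2, 2]), (512, [1]), (408, [6, 6, 6, 6]),
  (400, [3, 3, 4, 4, 4, 4]), (384, [2, 2]), (272, [2, 2]), (256, [1, 1]), (0, [0])]

def cellsC : List (ℕ × ℕ) := [(0, 0), (0, 1), (0, 2), (0, 3), (0, 4), (1, 1), (1, 2), (1, 3), (2, 2), (2, 3)]

def nbrsC : List (List (ℕ × Bool)) := [
  [], [(0, true)], [(1, true)], [(2, true)], [(3, true)], [(1, false)], [(2, false), (5, true)],
  [(3, false), (6, true)], [(6, false)], [(7, false), (8, true)]]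

def diagC : List Bool := [true, false, false, false, false, true, false, false, true, false]

def tabC : List (ℕ × List ℕ) := [
  (1023, [41]), (1022, [31, 31, 32, 32]), (1020, [22, 23, 23, 24, 24, 24, 24]),
  (1016, [16, 17, 17, 18, 18, 18, 18]), (1008, [12, 12, 13, 13]), (992, [9]),
  (988, [16, 16, 17, 17, 18, 18, 18, 18]),
  (984, [11, 11, 12, 12, 12, 12, 12, 12, 13, 13, 13, 13]), (976, [8, 8, 8, 8, 9, 9, 9, 9]),
  (960, [6, 6]), (920, [7, 8, 8, 8, 8, 9, 9, 9, 9]), (912, [5, 5, 6, 6, 6, 6, 6, 6]),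
  (896, [3, 4, 4]), (784, [3, 3, 4, 4]), (768, [2]), (664, [5, 5, 6, 6, 6, 6]),
  (656, [3, 3, 3, 3, 4, 4, 4, 4]), (640, [2, 2]), (528, [2, 2, 2, 2]), (512, [1, 1]),
  (16, [1, 1]), (0, [0])]

theorem certA : cert nbrsA diagA tabM tabA = true := by
  decide +kernel

set_option synthInstance.maxHeartbeats 400000 in
set_option synthInstance.maxSize 2000 in
theorem describesA : Describes cellsA (skewCells [5, 4, 3, 2, 1] [3, 2]) (fun _ => True) nbrsA diagA := by
  constructor <;> decide +kernel

theorem wfA : wfP nbrsA := fun c hc q hq => (describesA.nbr c hc q hq).1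

theorem certB : cert nbrsB diagB tabM tabB = true := by
  decide +kernel

set_option synthInstance.maxHeartbeats 400000 in
set_option synthInstance.maxSize 2000 in
theorem describesB : Describes cellsB (shiftedCells [5, 4, 1]) (fun c => c.1 = c.2) nbrsB diagB := by
  constructor <;> decide +kernel

theorem wfB : wfP nbrsB := fun c hc q hq => (describesB.nbr c hc q hq).1

theorem certC : cert nbrsC diagC tabM tabC = true := by
  decide +kernel

set_option synthInstance.maxHeartbeats 400000 in
set_option synthInstance.maxSize 2000 in
theorem describesC : Describes cellsC (shiftedCells [5, 3, 2]) (fun c => c.1 = c.2) nbrsC diagC := by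
  constructor <;> decide +kernel

theorem wfC : wfP nbrsC := fun c hc q hq => (describesC.nbr c hc q hq).1

theorem skewSchur_staircase_54321_32 :
    skewSchur [5, 4, 3, 2, 1] [3, 2] = schurP [5, 4, 1] + schurP [5, 3, 2] := by
  funext m
  change skewSchur [5, 4, 3, 2, 1] [3, 2] m = schurP [5, 4, 1] m + schurP [5, 3, 2] m
  unfold skewSchur schurP
  rw [Nat.card_congr (skewEquiv _ _ m), Nat.card_congr (shiftedEquiv _ m),
    Nat.card_congr (shiftedEquiv _ m)]
  by_cases h0 : m 0 = 0
  · rw [Nat.card_congr (tabsEquiv describesA h0), Nat.card_congr (tabsEquiv describesB h0),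
      Nat.card_congr (tabsEquiv describesC h0)]
    obtain ⟨N, hN⟩ : ∃ N, ∀ j, 0 + N < j → m j = 0 := by
      refine ⟨m.support.sup id, fun j hj => ?_⟩
      by_contra h
      have : j ≤ m.support.sup id := Finset.le_sup (f := id) (Finsupp.mem_support_iff.2 h)
      omega
    rw [card_eq_G wfA certA N 0 hN 1023 (by decide), card_eq_G wfB certB N 0 hN 1023 (by decide),
      card_eq_G wfC certC N 0 hN 1023 (by decide)]
    have eA : lookupT tabA 1023 = [40, 41] := by decide
    have eB : lookupT tabB 1023 = [40] := by decide
    have eC : lookupT tabC 1023 = [41] := by decide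
    rw [eA, eB, eC]
    simp
  · rw [tabs_empty h0, tabs_empty h0, tabs_empty h0]
    simp

end
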